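/- Let k ≥ 4 and m ≥ 2k. The ideal of the secant variety σ(G(k,K^m)) ⊂ ℙ(Λ^k K^m) of the Plücker-embedded Grassmannian contains the irreducible SL_m(K)-modules V_{2ω_{k−2}+ω_{k+4}} and V_{ω_{k−4}+2ω_{k+2}}, realized as submodules of S³V_{ω_k} = S³(Λ^k K^m), among its minimal generators (in degree three). -/

import Mathlib

/-!
Both highest weight vectors are Pfaffians of a skew-symmetric `6 × 6` matrix of linear forms on
`Λᵏ K^m`, up to the factor `48`.

For the weight `2ω_{k-2} + ω_{k+4}` (`exists_hw_first`), contract `T ∈ Λᵏ K^m` with the first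
`k - 2` coordinate covectors; this gives a bivector, and the matrix consists of its coordinates
`T_{{1,…,k-2} ∪ {a,b}}` with `k - 1 ≤ a, b ≤ k + 4`. For the weight `ω_{k-4} + 2ω_{k+2}`
(`exists_hw_second`), project `T` to `Λᵏ K^{k+2} ≅ Λ² (K^{k+2})*` and take the coordinates
`± T_{{1,…,k+2} ∖ {a,b}}` with `k - 3 ≤ a, b ≤ k + 2`.

A decomposable `T` gives a matrix of rank at most two in either case: its entries are
determinants with two free rows, the others being fixed (`det2_rank_two`). So a sum of two
decomposable vectors gives a matrix of rank at most four, whose `6 × 6` Pfaffian vanishes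
(`pf6_sum_two`), and the Pfaffian lies in the ideal of the secant variety. A unitriangular matrix
acts on the `6 × 6` matrix by a congruence of determinant one, because the rows or columns
outside the window `a, b` contribute nothing; the Pfaffian is therefore invariant
(`pf6_congruence`). A diagonal matrix rescales each entry by a monomial, and the product of these
monomials over a perfect matching of the window is the asserted weight. Finally the standard
symplectic matrix is attained at a sum of three decomposable vectors, so the Pfaffian is not zero.

Entries of the matrices are handled as alternating `k`-forms `φ` on `K^m`, which are the same as
linear forms `pair φ` on `Λᵏ K^m`; then `pair φ (v₁ ∧ ⋯ ∧ v_k) = φ v` (`pair_wedge`) and `Λᵏ g`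
acts by substituting `g` in `φ` (`pair_lamMap`). The lemma `exists_hw` collects what an array of
such forms must satisfy.
-/

open MvPolynomial

noncomputable section

section CoordBasics

variable (K : Type) [Field K]
variable (V : Type) [AddCommGroup V] [Module K V]

/-- Polynomial coordinate ring of the `K`-vector space `V`, with variables indexed by a
chosen basis of `V`. -/
abbrev Coord : Type := MvPolynomial (Module.Free.ChooseBasisIndex K V) K

/-- Evaluation of a polynomial function at a point of `V`. -/
def evalAt (v : V) : Coord K V →ₐ[K] K :=
  aeval fun i => (Module.Free.chooseBasis K V).repr v i

variable {V}

/-- The ideal of polynomial functions vanishing on a subset `S ⊆ V`. -/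
def vanIdeal (S : Set V) : Ideal (Coord K V) :=
  ⨅ x ∈ S, RingHom.ker (evalAt K V x)

/-- The Zariski closure of a subset of `V`. -/
def zcl (S : Set V) : Set V :=
  {v | ∀ P ∈ vanIdeal K S, evalAt K V v P = 0}

/-- The affine cone over the secant variety of the projective variety whose affine cone
is `X`: the Zariski closure of the set of sums of two elements of `X`. -/
def secantCone (X : Set V) : Set V :=
  zcl K {v | ∃ x ∈ X, ∃ y ∈ X, v = x + y}

/-- The homogeneous degree-`d` component of the vanishing ideal of `S`, as a `K`-subspace
of the coordinate ring. -/
def idealComponent (S : Set V) (d : ℕ) : Submodule K (Coord K V) :=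
  (homogeneousSubmodule _ K d) ⊓ Submodule.restrictScalars K (vanIdeal K S)

end CoordBasics

section LamModel

variable (K : Type) [Field K]

/-- Index set for the standard basis of `Λᵏ(Kⁿ)`: `k`-element subsets of `Fin n`. -/
abbrev kSub (n k : ℕ) : Type := {s : Finset (Fin n) // s.card = k}

/-- The concrete model of the `k`-th exterior power of `Kⁿ`, with coordinates indexed by
`k`-element subsets of `Fin n`. -/
abbrev Lam (n k : ℕ) : Type := kSub n k → K

/-- The wedge product `v 0 ∧ ⋯ ∧ v (k-1)` of `k` vectors of `Kⁿ`, in the concrete model: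
its coordinate on a `k`-subset `s` is the corresponding `k×k`-minor. -/
def wedge {n k : ℕ} (v : Fin k → (Fin n → K)) : Lam K n k := fun s =>
  Matrix.det (Matrix.of fun i j => v i ((s.1.orderIsoOfFin s.2 j : Fin n)))

/-- The `k`-th compound matrix (matrix of the induced map `Λᵏ g`) of an `n×n` matrix. -/
def compound {n : ℕ} (k : ℕ) (g : Matrix (Fin n) (Fin n) K) :
    Matrix (kSub n k) (kSub n k) K := fun s t =>
  Matrix.det (Matrix.of fun i j =>
    g ((s.1.orderIsoOfFin s.2 i : Fin n)) ((t.1.orderIsoOfFin t.2 j : Fin n)))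

/-- The induced action of an `n×n` matrix on the concrete `k`-th exterior power. -/
def lamMap {n : ℕ} (k : ℕ) (g : Matrix (Fin n) (Fin n) K) : Lam K n k →ₗ[K] Lam K n k :=
  Matrix.toLin' (compound K k g)

end LamModel


/-!
STATEMENT 5.
Let `k ≥ 4` and `m ≥ 2k`.  The ideal of the secant variety
`σ(G(k,K^m)) ⊆ ℙ(Λᵏ K^m)` of the Plücker-embedded Grassmannian contains the irreducible
`SL_m(K)`-modules `V_{2ω_{k−2}+ω_{k+4}}` and `V_{ω_{k−4}+2ω_{k+2}}`, realized as submodules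
of `S³V_{ω_k} = S³(Λᵏ K^m)`, among its minimal generators (in degree three).

We model `Λᵏ K^m` by its Plücker coordinates (`Lam K m k`), the Grassmannian cone by the
set of wedges of `k` vectors, and the action of `g ∈ GL_m` on polynomial functions by
`(g⬝P)(T) = P(Λᵏ(gᵀ) T)`, under which the degree-`d` polynomial functions form the module
`S^d(ΛᵏK^m)` with its standard action.  The occurrence of the irreducible module with
highest weight `λ` among the degree-three part of the ideal is expressed by the existence
of a nonzero highest weight vector in it: a polynomial fixed by all upper unitriangular
matrices and rescaled by the character `λ` under all diagonal matrices.
-/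

section Stmt5

variable {K : Type} [Field K]

/-- `P` is a highest weight vector of weight `∏ᵢ dᵢ^(e i)` (w.r.t. the standard Borel of
upper triangular matrices) for the action of `GL_m(K)` on polynomial functions on the
Plücker coordinate space of `Λᵏ(K^m)`. -/
def IsHWFunction (m k : ℕ) (e : Fin m → ℕ) (P : Coord K (Lam K m k)) : Prop :=
  P ≠ 0 ∧
  (∀ d : Fin m → K, ∀ T : Lam K m k,
    evalAt K (Lam K m k) (lamMap K k (Matrix.diagonal d) T) P =
      (∏ i, d i ^ e i) * evalAt K (Lam K m k) T P) ∧
  (∀ u : Matrix (Fin m) (Fin m) K, (∀ i, u i i = 1) → (∀ i j : Fin m, j < i → u i j = 0) →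
    ∀ T : Lam K m k,
      evalAt K (Lam K m k) (lamMap K k u.transpose T) P = evalAt K (Lam K m k) T P)

/-- The affine cone over the Plücker-embedded Grassmannian `G(k, K^m)`. -/
def grassConeL (K : Type) [Field K] (m k : ℕ) : Set (Lam K m k) :=
  {T | ∃ v : Fin k → (Fin m → K), T = wedge K v}

/-! ### The Pfaffian of a `6 × 6` array -/

section Pfaffian

variable {K : Type} [Field K]

/-- The Pfaffian of a `6 × 6` array, multiplied by `48`: the full skew-symmetrization of
`A₀₁ A₂₃ A₄₅`. -/
def pf6 (A : Fin 6 → Fin 6 → K) : K :=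
  ∑ σ : Equiv.Perm (Fin 6),
    ((σ.sign : ℤ) : K) * (A (σ 0) (σ 1) * A (σ 2) (σ 3) * A (σ 4) (σ 5))

/-- The multilinear form `x ↦ β(x₀,x₁) β(x₂,x₃) β(x₄,x₅)` attached to a bilinear form `β`. -/
def tripleForm {W : Type} [AddCommGroup W] [Module K W] (β : W →ₗ[K] W →ₗ[K] K) :
    MultilinearMap K (fun _ : Fin 6 => W) K where
  toFun x := β (x 0) (x 1) * β (x 2) (x 3) * β (x 4) (x 5)
  map_update_add' := by
    intro inst x i a b
    obtain rfl : inst = instDecidableEqFin 6 := Subsingleton.elim _ _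
    fin_cases i <;> simp [Function.update] <;> ring
  map_update_smul' := by
    intro inst x i c a
    obtain rfl : inst = instDecidableEqFin 6 := Subsingleton.elim _ _
    fin_cases i <;> simp [Function.update] <;> ring

/-- Up to the factor `48`, the alternating `6`-form `β ∧ β ∧ β`. -/
def pfForm {W : Type} [AddCommGroup W] [Module K W] (β : W →ₗ[K] W →ₗ[K] K) :
    W [⋀^Fin 6]→ₗ[K] K :=
  MultilinearMap.alternatization (tripleForm β)

lemma pfForm_apply {W : Type} [AddCommGroup W] [Module K W] (β : W →ₗ[K] W →ₗ[K] K)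
    (x : Fin 6 → W) : pfForm β x = pf6 (fun a b => β (x a) (x b)) := by
  simp only [pfForm, MultilinearMap.alternatization_apply, pf6]
  refine Finset.sum_congr rfl fun σ _ => ?_
  simp [tripleForm, Units.smul_def, zsmul_eq_mul]

/-- `Pf (U A Uᵀ) = det U · Pf A`: the form `β ∧ β ∧ β` on `K⁶` is a multiple of the
determinant. -/
lemma pf6_congruence (U : Matrix (Fin 6) (Fin 6) K) (A : Fin 6 → Fin 6 → K) :
    pf6 (fun a b => ∑ c, ∑ d, U a c * U b d * A c d) = U.det * pf6 A := by
  let β : (Fin 6 → K) →ₗ[K] (Fin 6 → K) →ₗ[K] K := Matrix.toLinearMap₂' K (Matrix.of A)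
  have h1 : pf6 (fun a b => ∑ c, ∑ d, U a c * U b d * A c d) = pfForm β (fun a => U a) := by
    rw [pfForm_apply]
    congr 1
    funext a b
    simp only [β, Matrix.toLinearMap₂'_apply, Matrix.of_apply, smul_eq_mul, mul_assoc]
  have h2 : pf6 A = pfForm β (Pi.basisFun K (Fin 6)) := by
    rw [pfForm_apply]
    congr 1
    funext a b
    simp only [β, Pi.basisFun_apply]
    simp [Matrix.toLinearMap₂'_apply, Pi.single_apply]
  have h3 (f : (Fin 6 → K) [⋀^Fin 6]→ₗ[K] K) : f (fun a => U a) =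
      f (Pi.basisFun K (Fin 6)) * (Pi.basisFun K (Fin 6)).det (fun a => U a) :=
    DFunLike.congr_fun (f.eq_smul_basis_det (Pi.basisFun K (Fin 6))) (fun a => U a)
  rw [h1, h2, h3, mul_comm]
  congr 1
  exact Pi.basisFun_det_apply _

/-- A skew form of rank at most four has vanishing `6 × 6` Pfaffian: it is pulled back from
`K⁴`, where six vectors are linearly dependent. -/
lemma pf6_sum_two (f h f' h' : Fin 6 → K) :
    pf6 (fun a b => (f a * h b - h a * f b) + (f' a * h' b - h' a * f' b)) = 0 := by
  let B : Matrix (Fin 4) (Fin 4) K := !![0, 1, 0, 0; -1, 0, 0, 0; 0, 0, 0, 1; 0, 0, -1, 0]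
  let β : (Fin 4 → K) →ₗ[K] (Fin 4 → K) →ₗ[K] K := Matrix.toLinearMap₂' K B
  let x : Fin 6 → (Fin 4 → K) := fun a => ![f a, h a, f' a, h' a]
  have h1 : pf6 (fun a b => (f a * h b - h a * f b) + (f' a * h' b - h' a * f' b))
      = pfForm β x := by
    rw [pfForm_apply]
    congr 1
    funext a b
    simp [β, B, x, Matrix.toLinearMap₂'_apply, Fin.sum_univ_four]
    ring
  rw [h1]
  apply AlternatingMap.map_linearDependent
  intro hli
  have := hli.fintype_card_le_finrank
  simp at this

/-- The standard symplectic array, pairing `0` with `1`, `2` with `3` and `4` with `5`. -/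
def symJ (a b : Fin 6) : ℤ :=
  if a.1 % 2 = 0 ∧ b.1 = a.1 + 1 then 1 else if b.1 % 2 = 0 ∧ a.1 = b.1 + 1 then -1 else 0

lemma symJ_sum : ∑ σ : Equiv.Perm (Fin 6), (σ.sign : ℤ) *
    (symJ (σ 0) (σ 1) * symJ (σ 2) (σ 3) * symJ (σ 4) (σ 5)) = 48 := by
  decide +kernel

lemma pf6_symJ : pf6 (fun a b => (symJ a b : K)) = 48 := by
  have := congrArg (Int.cast : ℤ → K) symJ_sum
  push_cast at this
  simpa [pf6] using this

end Pfaffian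

/-! ### Alternating forms as linear functions of the Plücker vector -/

section Pairing

variable {K : Type} [Field K]

/-- The increasing family of standard basis vectors indexed by a `k`-subset. -/
def stdFam (K : Type) [Field K] {m k : ℕ} (s : kSub m k) : Fin k → (Fin m → K) :=
  fun j => Pi.single (s.1.orderIsoOfFin s.2 j : Fin m) 1

/-- A single Plücker coordinate as an alternating form. -/
def wedgeAlt {m k : ℕ} (s : kSub m k) : (Fin m → K) [⋀^Fin k]→ₗ[K] K :=
  Matrix.detRowAlternating.compLinearMap
    (LinearMap.funLeft K K fun j => (s.1.orderIsoOfFin s.2 j : Fin m))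

lemma wedgeAlt_apply {m k : ℕ} (s : kSub m k) (v : Fin k → (Fin m → K)) :
    wedgeAlt s v = wedge K v s := rfl

/-- The linear functional on the space of Plücker vectors given by an alternating form. -/
def pair {m k : ℕ} (φ : (Fin m → K) [⋀^Fin k]→ₗ[K] K) : Lam K m k →ₗ[K] K :=
  ∑ s, φ (stdFam K s) • LinearMap.proj s

lemma pair_apply {m k : ℕ} (φ : (Fin m → K) [⋀^Fin k]→ₗ[K] K) (T : Lam K m k) :
    pair φ T = ∑ s, φ (stdFam K s) * T s := by
  simp [pair]

lemma alternating_sum_apply {m k : ℕ} {ι : Type} (t : Finset ι)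
    (f : ι → (Fin m → K) [⋀^Fin k]→ₗ[K] K) (v : Fin k → (Fin m → K)) :
    (∑ i ∈ t, f i) v = ∑ i ∈ t, f i v := by
  classical
  induction t using Finset.induction_on with
  | empty => simp
  | insert a t ha ih => simp [Finset.sum_insert ha, ih]

lemma wedge_stdFam {m k : ℕ} (s t : kSub m k) :
    wedge K (stdFam K s) t = if t = s then 1 else 0 := by
  split_ifs with h
  · subst h
    rw [wedge, ← Matrix.det_one (n := Fin k)]
    congr 1
    ext i j
    simp [stdFam, Pi.single_apply, Matrix.one_apply, eq_comm]
  · have : ∃ i, i ∈ s.1 ∧ i ∉ t.1 := by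
      by_contra! hc
      exact h (Subtype.ext (Finset.eq_of_subset_of_card_le hc (by rw [s.2, t.2])).symm)
    obtain ⟨i, hi, hit⟩ := this
    refine Matrix.det_eq_zero_of_row_eq_zero ((s.1.orderIsoOfFin s.2).symm ⟨i, hi⟩) fun j => ?_
    simp only [Matrix.of_apply, stdFam, OrderIso.apply_symm_apply]
    rw [Pi.single_apply, if_neg]
    rintro h'
    exact hit (h' ▸ (t.1.orderIsoOfFin t.2 j).2)

/-- An alternating form evaluated on `v₁,…,v_k` only depends on the Plücker vector of the
`vᵢ`, through the functional `pair φ`. -/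
lemma pair_wedge {m k : ℕ} (φ : (Fin m → K) [⋀^Fin k]→ₗ[K] K) (v : Fin k → (Fin m → K)) :
    pair φ (wedge K v) = φ v := by
  have key : (∑ s, φ (stdFam K s) • wedgeAlt (K := K) s) = φ := by
    refine Module.Basis.ext_alternating (Pi.basisFun K (Fin m)) fun f hf => ?_
    let s : kSub m k := ⟨Finset.univ.image f, by
      rw [Finset.card_image_of_injective _ hf, Finset.card_univ, Fintype.card_fin]⟩
    let g : Fin k → Fin k := fun i =>
      (s.1.orderIsoOfFin s.2).symm ⟨f i, Finset.mem_image_of_mem f (Finset.mem_univ i)⟩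
    have hg : Function.Injective g := by
      intro i j hij
      have := (s.1.orderIsoOfFin s.2).symm.injective hij
      exact hf (Subtype.ext_iff.1 this)
    let σ : Equiv.Perm (Fin k) := Equiv.ofBijective g (Finite.injective_iff_bijective.1 hg)
    have hσ : (fun i => Pi.basisFun K (Fin m) (f i)) = stdFam K s ∘ σ := by
      funext i
      simp [stdFam, σ, g]
    rw [hσ, AlternatingMap.map_perm, AlternatingMap.map_perm]
    congr 1
    simp [alternating_sum_apply, wedgeAlt_apply, wedge_stdFam]
  conv_rhs => rw [← key]
  simp [alternating_sum_apply, wedgeAlt_apply, pair_apply]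

lemma lamMap_apply {m k : ℕ} (g : Matrix (Fin m) (Fin m) K) (T : Lam K m k) :
    lamMap K k g T = ∑ t, T t • wedge K (fun i => g.mulVec (stdFam K t i)) := by
  funext s
  simp only [lamMap, Matrix.toLin'_apply, Matrix.mulVec, dotProduct, Finset.sum_apply,
    Pi.smul_apply, smul_eq_mul]
  refine Finset.sum_congr rfl fun t _ => ?_
  rw [mul_comm, compound, wedge, ← Matrix.det_transpose]
  congr 2
  ext i j
  simp [stdFam]

/-- Functoriality: `Λᵏ g` acts on the pairing by substituting `g` in the alternating form. -/
lemma pair_lamMap {m k : ℕ} (φ : (Fin m → K) [⋀^Fin k]→ₗ[K] K)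
    (g : Matrix (Fin m) (Fin m) K) (T : Lam K m k) :
    pair φ (lamMap K k g T) = ∑ t, T t * φ (fun i => g.mulVec (stdFam K t i)) := by
  rw [lamMap_apply, map_sum]
  simp [pair_wedge]

end Pairing

/-! ### Highest weight vectors from Pfaffians -/

section Construction

variable {K : Type} [Field K]

/-- The polynomial of degree one representing a linear functional. -/
def linPoly {V : Type} [AddCommGroup V] [Module K V] [FiniteDimensional K V]
    (l : V →ₗ[K] K) : Coord K V :=
  ∑ i, C (l (Module.Free.chooseBasis K V i)) * X i

lemma evalAt_linPoly {V : Type} [AddCommGroup V] [Module K V] [FiniteDimensional K V]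
    (l : V →ₗ[K] K) (T : V) : evalAt K V T (linPoly l) = l T := by
  conv_rhs => rw [← (Module.Free.chooseBasis K V).sum_repr T, map_sum]
  simp [evalAt, linPoly, mul_comm]

lemma linPoly_homogeneous {V : Type} [AddCommGroup V] [Module K V] [FiniteDimensional K V]
    (l : V →ₗ[K] K) : (linPoly l).IsHomogeneous 1 := by
  refine IsHomogeneous.sum _ _ _ fun i _ => ?_
  simpa using (isHomogeneous_C _ _).mul (isHomogeneous_X K i)

/-- The cubic polynomial `T ↦ 48 · Pf (⟨φ a b, T⟩)` on Plücker space. -/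
def pfPoly {m k : ℕ} (φ : Fin 6 → Fin 6 → (Fin m → K) [⋀^Fin k]→ₗ[K] K) :
    Coord K (Lam K m k) :=
  ∑ σ : Equiv.Perm (Fin 6), C ((σ.sign : ℤ) : K) *
    (linPoly (pair (φ (σ 0) (σ 1))) * linPoly (pair (φ (σ 2) (σ 3))) *
      linPoly (pair (φ (σ 4) (σ 5))))

lemma evalAt_pfPoly {m k : ℕ} (φ : Fin 6 → Fin 6 → (Fin m → K) [⋀^Fin k]→ₗ[K] K)
    (T : Lam K m k) :
    evalAt K (Lam K m k) T (pfPoly φ) = pf6 (fun a b => pair (φ a b) T) := by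
  simp only [pfPoly, map_sum, map_mul, evalAt_linPoly, pf6]
  simp [evalAt]

lemma mem_vanIdeal {V : Type} [AddCommGroup V] [Module K V] (S : Set V) (P : Coord K V) :
    P ∈ vanIdeal K S ↔ ∀ x ∈ S, evalAt K V x P = 0 := by
  simp [vanIdeal, RingHom.mem_ker]

/-- The four properties of a `6 × 6` array of alternating `k`-forms which make its Pfaffian a
highest weight vector of weight `e` in the ideal of the secant variety: it has rank at most
two on decomposable vectors, it is rescaled by diagonal matrices so that the Pfaffian has
weight `e`, it undergoes a congruence of determinant one under transposes of unitriangular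
matrices, and it is the standard symplectic array at some point. -/
lemma exists_hw {m k : ℕ} [CharZero K] (φ : Fin 6 → Fin 6 → (Fin m → K) [⋀^Fin k]→ₗ[K] K)
    (e : Fin m → ℕ)
    (hvan : ∀ v, ∃ f h : Fin 6 → K, ∀ a b, φ a b v = f a * h b - h a * f b)
    (hdiag : ∀ d : Fin m → K, ∃ c : Fin 6 → Fin 6 → K,
      (∀ a b v, φ a b (fun i => (Matrix.diagonal d).mulVec (v i)) = c a b * φ a b v) ∧
      ∀ σ : Equiv.Perm (Fin 6),
        c (σ 0) (σ 1) * c (σ 2) (σ 3) * c (σ 4) (σ 5) = ∏ i, d i ^ e i)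
    (huni : ∀ u : Matrix (Fin m) (Fin m) K, (∀ i, u i i = 1) →
      (∀ i j : Fin m, j < i → u i j = 0) → ∃ U : Matrix (Fin 6) (Fin 6) K, U.det = 1 ∧
      ∀ a b v, φ a b (fun i => u.transpose.mulVec (v i)) =
        ∑ c, ∑ d, U a c * U b d * φ c d v)
    (hne : ∃ (s : Fin 3 → K) (v : Fin 3 → Fin k → (Fin m → K)),
      ∀ a b, ∑ i, s i * φ a b (v i) = (symJ a b : K)) :
    ∃ P ∈ idealComponent K (secantCone K (grassConeL K m k)) 3, IsHWFunction m k e P := by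
  refine ⟨pfPoly φ, ⟨?_, ?_⟩, ?_, ?_, ?_⟩
  · refine IsHomogeneous.sum _ _ _ fun σ _ => ?_
    simpa only [zero_add] using (isHomogeneous_C _ ((σ.sign : ℤ) : K)).mul
      (((linPoly_homogeneous (pair (φ (σ 0) (σ 1)))).mul
        (linPoly_homogeneous (pair (φ (σ 2) (σ 3))))).mul
        (linPoly_homogeneous (pair (φ (σ 4) (σ 5)))))
  · change pfPoly φ ∈ vanIdeal K _
    rw [mem_vanIdeal]
    intro T hT
    refine hT _ ?_
    rw [mem_vanIdeal]
    rintro _ ⟨_, ⟨v, rfl⟩, _, ⟨w, rfl⟩, rfl⟩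
    obtain ⟨f, h, hv⟩ := hvan v
    obtain ⟨f', h', hw⟩ := hvan w
    rw [evalAt_pfPoly]
    simp only [map_add, pair_wedge, hv, hw]
    exact pf6_sum_two f h f' h'
  · intro h0
    obtain ⟨s, v, hs⟩ := hne
    have := evalAt_pfPoly φ (∑ i, s i • wedge K (v i))
    rw [h0, map_zero] at this
    simp only [map_sum, map_smul, pair_wedge, smul_eq_mul, hs, pf6_symJ] at this
    norm_num at this
  · intro d T
    obtain ⟨c, hc, hσ⟩ := hdiag d
    rw [evalAt_pfPoly, evalAt_pfPoly, pf6, pf6, Finset.mul_sum]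
    refine Finset.sum_congr rfl fun σ _ => ?_
    have : ∀ a b, pair (φ a b) (lamMap K k (Matrix.diagonal d) T) = c a b * pair (φ a b) T := by
      intro a b
      rw [pair_lamMap, pair_apply, Finset.mul_sum]
      refine Finset.sum_congr rfl fun t _ => ?_
      rw [hc]
      ring
    rw [this, this, this, ← hσ σ]
    ring
  · intro u hu hu' T
    obtain ⟨U, hU, h⟩ := huni u hu hu'
    have : ∀ a b, pair (φ a b) (lamMap K k u.transpose T) =
        ∑ c, ∑ d, U a c * U b d * pair (φ c d) T := by
      intro a b
      rw [pair_lamMap]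
      simp only [pair_apply, h, Finset.mul_sum]
      rw [Finset.sum_comm]
      refine Finset.sum_congr rfl fun c _ => ?_
      rw [Finset.sum_comm]
      refine Finset.sum_congr rfl fun d _ => Finset.sum_congr rfl fun t _ => ?_
      ring
    rw [evalAt_pfPoly, evalAt_pfPoly]
    simp only [this]
    rw [pf6_congruence U (fun c d => pair (φ c d) T), hU, one_mul]

end Construction

/-! ### Determinants with two distinguished rows -/

section TwoFreeRows

variable {K : Type} [Field K] {N : ℕ}

open Matrix (vecCons)

/-- The determinant of the rows `p, q, c₀, …, c_{N-1}`, as an alternating form in `c`. -/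
def det2 (p q : Fin (N + 2) → K) : (Fin (N + 2) → K) [⋀^Fin N]→ₗ[K] K :=
  ((Matrix.detRowAlternating (n := Fin (N + 2)) (R := K)).curryLeft p).curryLeft q

lemma det2_apply (p q : Fin (N + 2) → K) (c : Fin N → Fin (N + 2) → K) :
    det2 p q c = Matrix.det (Matrix.of (vecCons p (vecCons q c))) := rfl

/-- `det2` as a bilinear form in its two distinguished rows. -/
def det2Bil (c : Fin N → Fin (N + 2) → K) :
    (Fin (N + 2) → K) →ₗ[K] (Fin (N + 2) → K) →ₗ[K] K :=
  LinearMap.mk₂ K (fun p q => det2 p q c) (by simp [det2]) (by simp [det2])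
    (by simp [det2]) (by simp [det2])

lemma det2Bil_apply (p q : Fin (N + 2) → K) (c : Fin N → Fin (N + 2) → K) :
    det2Bil c p q = det2 p q c := rfl

lemma one_ne_succ_succ (j : Fin N) : (1 : Fin (N + 2)) ≠ j.succ.succ := by
  rw [← Fin.succ_zero_eq_one]
  exact fun h => (Fin.succ_ne_zero _).symm (Fin.succ_injective _ h)

lemma det2_self (p : Fin (N + 2) → K) (c : Fin N → Fin (N + 2) → K) : det2 p p c = 0 := by
  rw [det2_apply]
  exact Matrix.det_zero_of_row_eq (i := 0) (j := 1) (by simp) rfl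

lemma det2_left (j : Fin N) (q : Fin (N + 2) → K) (c : Fin N → Fin (N + 2) → K) :
    det2 (c j) q c = 0 := by
  rw [det2_apply]
  exact Matrix.det_zero_of_row_eq (i := 0) (j := j.succ.succ) (Fin.succ_ne_zero _).symm rfl

lemma det2_right (j : Fin N) (p : Fin (N + 2) → K) (c : Fin N → Fin (N + 2) → K) :
    det2 p (c j) c = 0 := by
  rw [det2_apply]
  exact Matrix.det_zero_of_row_eq (i := 1) (j := j.succ.succ) (one_ne_succ_succ j) rfl

lemma det2_swap (p q : Fin (N + 2) → K) (c : Fin N → Fin (N + 2) → K) :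
    det2 p q c = - det2 q p c := by
  have h := det2_self (p + q) c
  simp only [← det2Bil_apply, map_add, LinearMap.add_apply] at h ⊢
  simp only [det2Bil_apply, det2_self] at h ⊢
  linear_combination h

/-- The last `N` standard basis vectors of `K^{N+2}`. -/
def tailStd (K : Type) [Field K] (N : ℕ) : Fin N → Fin (N + 2) → K :=
  fun j => Pi.single j.succ.succ 1

lemma det2_one : det2 (Pi.single 0 1) (Pi.single 1 1) (tailStd K N) = 1 := by
  rw [det2_apply, ← Matrix.det_one (n := Fin (N + 2))]
  congr 1
  ext i j
  refine Fin.cases ?_ (fun i => Fin.cases ?_ (fun i => ?_) i) i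
  · simp [Pi.single_apply, Matrix.one_apply, eq_comm]
  · simp [Pi.single_apply, Matrix.one_apply, eq_comm]
  · simp [tailStd, Pi.single_apply, Matrix.one_apply, eq_comm]

lemma det2_tailStd (p q : Fin (N + 2) → K) :
    det2 p q (tailStd K N) = p 0 * q 1 - p 1 * q 0 := by
  let B : (Fin (N + 2) → K) →ₗ[K] (Fin (N + 2) → K) →ₗ[K] K :=
    LinearMap.mk₂ K (fun p q => p 0 * q 1 - p 1 * q 0)
      (by intros; simp; ring) (by intros; simp; ring) (by intros; simp; ring)
      (by intros; simp; ring)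
  have hB : ∀ p q, B p q = p 0 * q 1 - p 1 * q 0 := fun _ _ => rfl
  suffices h : det2Bil (tailStd K N) = B by
    rw [← det2Bil_apply, h, hB]
  refine LinearMap.ext_basis (Pi.basisFun K _) (Pi.basisFun K _) fun i j => ?_
  rw [det2Bil_apply, hB, Pi.basisFun_apply, Pi.basisFun_apply]
  have h2 (i : Fin N) : (Pi.single i.succ.succ 1 : Fin (N + 2) → K) = tailStd K N i := rfl
  have h01 : (1 : Fin (N + 2)) ≠ 0 := by simp
  have hs (i : Fin N) : (1 : Fin (N + 2)) ≠ i.succ.succ := one_ne_succ_succ i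
  have hs0 (i : Fin N) : (0 : Fin (N + 2)) ≠ i.succ.succ := (Fin.succ_ne_zero _).symm
  induction i using Fin.cases with
  | zero =>
    induction j using Fin.cases with
    | zero => simp [det2_self]
    | succ j =>
      induction j using Fin.cases with
      | zero => simp [det2_one]
      | succ j => rw [h2, det2_right]; simp [tailStd, hs, hs0]
  | succ i =>
    induction i using Fin.cases with
    | zero =>
      induction j using Fin.cases with
      | zero => rw [det2_swap]; simp [det2_one]
      | succ j =>
        induction j using Fin.cases with
        | zero => simp [det2_self]
        | succ j => rw [h2, det2_right]; simp [tailStd, hs, hs0]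
    | succ i => rw [h2, det2_left]; simp [tailStd, Pi.single_apply, hs, hs0]

/-- As a bilinear form in `p, q`, the determinant of `p, q, c` has rank at most two: if it is
not zero, then `c` together with suitable `p₀, q₀` is a basis, and the form is the minor of the
coordinates along `p₀` and `q₀`, up to a factor. -/
lemma det2_rank_two (c : Fin N → Fin (N + 2) → K) :
    ∃ f h : (Fin (N + 2) → K) → K, ∀ p q, det2 p q c = f p * h q - h p * f q := by
  by_cases hc : ∀ p q, det2 p q c = 0
  · exact ⟨0, 0, by simp [hc]⟩
  push Not at hc
  obtain ⟨p₀, q₀, h₀⟩ := hc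
  rw [det2_apply] at h₀
  set M : Matrix (Fin (N + 2)) (Fin (N + 2)) K := Matrix.of (vecCons p₀ (vecCons q₀ c)) with hM
  have hu : IsUnit M.det := isUnit_iff_ne_zero.2 h₀
  refine ⟨fun p => Matrix.vecMul p M⁻¹ 0, fun p => M.det * Matrix.vecMul p M⁻¹ 1,
    fun p q => ?_⟩
  have key : Matrix.of (vecCons p (vecCons q c)) = Matrix.of (vecCons (Matrix.vecMul p M⁻¹)
      (vecCons (Matrix.vecMul q M⁻¹) (tailStd K N))) * M := by
    have hv (x : Fin (N + 2) → K) : Matrix.vecMul (Matrix.vecMul x M⁻¹) M = x := by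
      rw [Matrix.vecMul_vecMul, Matrix.nonsing_inv_mul _ hu, Matrix.vecMul_one]
    funext i
    rw [Matrix.mul_apply_eq_vecMul]
    refine Fin.cases ?_ (fun i => Fin.cases ?_ (fun i => ?_) i) i
    · exact (hv p).symm
    · exact (hv q).symm
    · change c i = Matrix.vecMul (Pi.single i.succ.succ 1) M
      rw [Matrix.single_one_vecMul]
      rfl
  rw [det2_apply, key, Matrix.det_mul, ← det2_apply, det2_tailStd]
  ring

/-- A bilinear form with the vectors `z j` in its left and right kernels only sees the components
along the vectors `p c`. -/
lemma bilin_window {W : Type} [AddCommGroup W] [Module K W] (B : W →ₗ[K] W →ₗ[K] K)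
    (z : Fin N → W) (hz : ∀ j q, B (z j) q = 0) (hz' : ∀ j q, B q (z j) = 0)
    (p : Fin 6 → W) (s t : Fin N → K) (U V : Fin 6 → K) :
    B (∑ j, s j • z j + ∑ c, U c • p c) (∑ j, t j • z j + ∑ c, V c • p c) =
      ∑ c, ∑ d, U c * V d * B (p c) (p d) := by
  have hl (y : W) : B (∑ j, s j • z j + ∑ c, U c • p c) y = ∑ c, U c * B (p c) y := by
    simp [hz]
  have hr (x : W) : B x (∑ j, t j • z j + ∑ c, V c • p c) = ∑ d, V d * B x (p d) := by
    simp [hz']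
  rw [hl]
  refine Finset.sum_congr rfl fun c _ => ?_
  rw [hr, Finset.mul_sum]
  exact Finset.sum_congr rfl fun d _ => by ring

lemma symJ_eq (a b : Fin 6) : ∑ i : Fin 3,
    ((if a.1 = 2 * i.1 then 1 else 0) * (if b.1 = 2 * i.1 + 1 then 1 else 0) -
      (if a.1 = 2 * i.1 + 1 then 1 else 0) * (if b.1 = 2 * i.1 then 1 else 0) : ℤ) =
    symJ a b := by
  revert a b
  decide

lemma symJ_eq' (a b : Fin 6) : ∑ i : Fin 3,
    ((if a.1 = 2 * i.1 then 1 else 0) * (if b.1 = 2 * i.1 + 1 then 1 else 0) -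
      (if a.1 = 2 * i.1 + 1 then 1 else 0) * (if b.1 = 2 * i.1 then 1 else 0) : K) =
    (symJ a b : K) := by
  rw [← symJ_eq]
  push_cast
  rfl

end TwoFreeRows

/-! ### The weight `2ω_{k-2} + ω_{k+4}` -/

section FirstFamily

variable {K : Type} [Field K] {N r : ℕ}

open Matrix (vecCons)

/-- The `j`-th of the first `N` indices in `Fin (N + 6 + r)`. -/
def lowIdx (N r : ℕ) (j : Fin N) : Fin (N + 6 + r) := Fin.castAdd r (Fin.castAdd 6 j)

/-- The `a`-th of the six indices `N, …, N + 5` in `Fin (N + 6 + r)`. -/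
def midIdx (N r : ℕ) (a : Fin 6) : Fin (N + 6 + r) := Fin.castAdd r (Fin.natAdd N a)

/-- The linear map `w ↦ (⟨x,w⟩, ⟨y,w⟩, w₀, …, w_{N-1})`. -/
def rowMap (x y : Fin (N + 6 + r) → K) : (Fin (N + 6 + r) → K) →ₗ[K] (Fin (N + 2) → K) :=
  LinearMap.pi (vecCons (dotProductBilin K K x) (vecCons (dotProductBilin K K y)
    fun j => LinearMap.proj (lowIdx N r j)))

/-- The alternating form `x ∧ y ∧ e⁰ ∧ ⋯ ∧ e^{N-1}` of degree `N + 2`, for covectors `x, y`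
(given by their coordinates). With `x, y` dual basis vectors this is a Plücker coordinate. -/
def famA (x y : Fin (N + 6 + r) → K) : (Fin (N + 6 + r) → K) [⋀^Fin (N + 2)]→ₗ[K] K :=
  Matrix.detRowAlternating.compLinearMap (rowMap x y)

/-- The values of a covector on a family of vectors. -/
def evalRow {m k : ℕ} (v : Fin k → Fin m → K) : (Fin m → K) →ₗ[K] (Fin k → K) :=
  Matrix.mulVecLin (Matrix.of v)

lemma evalRow_single {m k : ℕ} (v : Fin k → Fin m → K) (i : Fin m) (j : Fin k) :
    evalRow v (Pi.single i 1) j = v j i := by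
  simp [evalRow]

/-- Up to transposition, `famA x y v` is the determinant whose rows are the values on `v` of the
covectors `x, y, e⁰, …, e^{N-1}`. -/
lemma famA_apply (x y : Fin (N + 6 + r) → K) (v : Fin (N + 2) → Fin (N + 6 + r) → K) :
    famA x y v = det2 (evalRow v x) (evalRow v y)
      (fun j => evalRow v (Pi.single (lowIdx N r j) 1)) := by
  rw [det2_apply, ← Matrix.det_transpose]
  change Matrix.det _ = _
  congr 1
  ext i l
  simp only [Matrix.transpose_apply, Matrix.of_apply]
  refine Fin.cases ?_ (fun l => Fin.cases ?_ (fun l => ?_) l) l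
  · simp [rowMap, evalRow, Matrix.mulVec, dotProduct, mul_comm]
  · simp [rowMap, evalRow, Matrix.mulVec, dotProduct, mul_comm]
  · simp [rowMap, evalRow]

lemma evalRow_mulVec {m k : ℕ} (v : Fin k → Fin m → K) (g : Matrix (Fin m) (Fin m) K)
    (x : Fin m → K) :
    evalRow (fun i => g.mulVec (v i)) x = evalRow v (g.transpose.mulVec x) := by
  funext i
  change g.mulVec (v i) ⬝ᵥ x = v i ⬝ᵥ g.transpose.mulVec x
  rw [Matrix.mulVec_transpose, dotProduct_comm, Matrix.dotProduct_mulVec, dotProduct_comm]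

lemma sum_idx {M : Type} [AddCommMonoid M] (F : Fin (N + 6 + r) → M) :
    ∑ i, F i = (∑ j, F (lowIdx N r j) + ∑ a, F (midIdx N r a)) + ∑ l, F (Fin.natAdd _ l) := by
  rw [Fin.sum_univ_add, Fin.sum_univ_add]
  rfl

lemma prod_idx {M : Type} [CommMonoid M] (F : Fin (N + 6 + r) → M) :
    ∏ i, F i = ((∏ j, F (lowIdx N r j)) * ∏ a, F (midIdx N r a)) * ∏ l, F (Fin.natAdd _ l) := by
  rw [Fin.prod_univ_add, Fin.prod_univ_add]
  rfl

lemma det2_unitriangular (p q : Fin (N + 2) → K) (c : Fin N → Fin (N + 2) → K)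
    (A : Fin N → Fin N → K) (h1 : ∀ i, A i i = 1) (h0 : ∀ i j, i < j → A i j = 0) :
    det2 p q (fun j => ∑ l, A j l • c l) = det2 p q c := by
  let D : Matrix (Fin (N + 2)) (Fin (N + 2)) K :=
    Matrix.of (vecCons (Pi.single 0 1) (vecCons (Pi.single 1 1)
      (fun j => vecCons 0 (vecCons 0 (A j)))))
  have hD : D.det = 1 := by
    rw [Matrix.det_of_isLowerTriangular]
    · refine Finset.prod_eq_one fun i _ => ?_
      refine Fin.cases ?_ (fun i => Fin.cases ?_ (fun i => ?_) i) i
      · simp [D]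
      · simp [D]
      · simp [D, h1]
    · intro i j hij
      replace hij : i < j := hij
      revert hij
      refine Fin.cases ?_ (fun i => Fin.cases ?_ (fun i => ?_) i) i
      · intro hij
        simp [D, hij.ne']
      · intro hij
        have : j ≠ 1 := fun h => by simp [h] at hij
        simp [D, this]
      · refine Fin.cases ?_ (fun j => Fin.cases ?_ (fun j => ?_) j) j
        · simp [D]
        · simp [D]
        · intro hij
          simp only [Fin.succ_lt_succ_iff] at hij
          simp [D, h0 _ _ hij]
  rw [det2_apply, det2_apply, ← one_mul (Matrix.det (Matrix.of (vecCons p (vecCons q c)))),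
    ← hD, ← Matrix.det_mul]
  congr 1
  funext i
  rw [Matrix.mul_apply_eq_vecMul]
  refine Fin.cases ?_ (fun i => Fin.cases ?_ (fun i => ?_) i) i
  · change p = Matrix.vecMul (Pi.single 0 1) _
    rw [Matrix.single_one_vecMul]
    rfl
  · change q = Matrix.vecMul (Pi.single 1 1) _
    rw [Matrix.single_one_vecMul]
    rfl
  · change ∑ l, A i l • c l = Matrix.vecMul (vecCons 0 (vecCons 0 (A i))) _
    funext x
    simp [Matrix.vecMul, dotProduct, Fin.sum_univ_succ]

lemma transpose_diag_single {m : ℕ} (d : Fin m → K) (i : Fin m) :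
    (Matrix.diagonal d).transpose.mulVec (Pi.single i 1) = d i • Pi.single i 1 := by
  funext j
  by_cases h : j = i
  · subst h; simp [Matrix.diagonal_transpose]
  · simp [Matrix.diagonal_transpose, h]

lemma det2_smul (s t : K) (d : Fin N → K) (p q : Fin (N + 2) → K)
    (c : Fin N → Fin (N + 2) → K) :
    det2 (s • p) (t • q) (fun j => d j • c j) = (s * t * ∏ j, d j) * det2 p q c := by
  have h := (det2 (s • p) (t • q)).map_smul_univ d c
  rw [h, ← det2Bil_apply]
  simp only [map_smul, LinearMap.smul_apply, smul_eq_mul, det2Bil_apply]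
  ring

lemma mulVec_single_one_eq_sum {m n : ℕ} (u : Matrix (Fin n) (Fin m) K) (i : Fin m) :
    u.mulVec (Pi.single i 1) = ∑ l, u l i • (Pi.single l 1 : Fin n → K) := by
  funext j
  simp [Finset.sum_apply, Pi.single_apply]

/-- The Pfaffian of the Plücker coordinates `T_{{0,…,N-1} ∪ {a,b}}`, `N ≤ a, b < N + 6`, is the
highest weight vector of weight `2ω_N + ω_{N+6}`, where `k = N + 2`. -/
theorem exists_hw_first [CharZero K] (e : Fin (N + 6 + r) → ℕ)
    (he : e = fun i : Fin (N + 6 + r) =>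
      (if (i : ℕ) < N then 2 else 0) + (if (i : ℕ) < N + 6 then 1 else 0)) :
    ∃ P ∈ idealComponent K (secantCone K (grassConeL K (N + 6 + r) (N + 2))) 3,
      IsHWFunction (N + 6 + r) (N + 2) e P := by
  refine exists_hw (fun a b => famA (Pi.single (midIdx N r a) 1) (Pi.single (midIdx N r b) 1))
    e ?_ ?_ ?_ ?_
  · intro v
    obtain ⟨f, h, hfh⟩ := det2_rank_two (fun j => evalRow v (Pi.single (lowIdx N r j) 1))
    exact ⟨fun a => f (evalRow v (Pi.single (midIdx N r a) 1)),
      fun a => h (evalRow v (Pi.single (midIdx N r a) 1)), fun a b => by rw [famA_apply, hfh]⟩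
  · intro d
    refine ⟨fun a b => d (midIdx N r a) * d (midIdx N r b) * ∏ j, d (lowIdx N r j), ?_, ?_⟩
    · intro a b v
      rw [famA_apply, famA_apply]
      simp only [evalRow_mulVec, transpose_diag_single, map_smul]
      exact det2_smul _ _ _ _ _ _
    · intro σ
      have hσ : ∏ a, d (midIdx N r a) = ∏ a, d (midIdx N r (σ a)) :=
        (Equiv.prod_comp σ fun a => d (midIdx N r a)).symm
      rw [prod_idx, he]
      have h1 : ∏ j, d (lowIdx N r j) ^ ((if (lowIdx N r j : ℕ) < N then 2 else 0) +
          (if (lowIdx N r j : ℕ) < N + 6 then 1 else 0)) = (∏ j, d (lowIdx N r j)) ^ 3 := by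
        rw [← Finset.prod_pow]
        refine Finset.prod_congr rfl fun j _ => ?_
        have : (lowIdx N r j : ℕ) < N := j.2
        rw [if_pos this, if_pos (by omega)]
      have h2 : ∏ a, d (midIdx N r a) ^ ((if (midIdx N r a : ℕ) < N then 2 else 0) +
          (if (midIdx N r a : ℕ) < N + 6 then 1 else 0)) = ∏ a, d (midIdx N r a) := by
        refine Finset.prod_congr rfl fun a _ => ?_
        have : (midIdx N r a : ℕ) = N + a := rfl
        rw [if_neg (by omega), if_pos (by omega), zero_add, pow_one]
      have h3 : ∏ l : Fin r, d (Fin.natAdd (N + 6) l) ^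
          ((if (Fin.natAdd (N + 6) l : ℕ) < N then 2 else 0) +
          (if (Fin.natAdd (N + 6) l : ℕ) < N + 6 then 1 else 0)) = 1 := by
        refine Finset.prod_eq_one fun l _ => ?_
        have : (Fin.natAdd (N + 6) l : ℕ) = N + 6 + l := rfl
        rw [if_neg (by omega), if_neg (by omega), zero_add, pow_zero]
      rw [h1, h2, h3, hσ, Fin.prod_univ_six]
      ring
  · intro u hu hu'
    -- Substituting `uᵀ v` for `v` amounts to applying `u` to the covectors. Since `u` is upper
    -- triangular, `u e_a` is a combination of the `e_c` with `c ≤ a`, and the form vanishes on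
    -- the first `N` of these.
    refine ⟨Matrix.of fun a c => u (midIdx N r c) (midIdx N r a), ?_, ?_⟩
    · rw [Matrix.det_of_isLowerTriangular]
      · simp [hu]
      · intro a c hac
        refine hu' _ _ ?_
        change N + a.1 < N + c.1
        have : a.1 < c.1 := hac
        omega
    · intro a b v
      simp only [famA_apply, evalRow_mulVec, Matrix.transpose_transpose, Matrix.of_apply]
      have hc : (fun j => evalRow v (u.mulVec (Pi.single (lowIdx N r j) 1))) = fun j =>
          ∑ l, u (lowIdx N r l) (lowIdx N r j) • evalRow v (Pi.single (lowIdx N r l) 1) := by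
        funext j
        rw [mulVec_single_one_eq_sum, map_sum, sum_idx]
        have h1 (a : Fin 6) : u (midIdx N r a) (lowIdx N r j) = 0 :=
          hu' _ _ (show j.1 < N + a.1 by omega)
        have h2 (l : Fin r) : u (Fin.natAdd (N + 6) l) (lowIdx N r j) = 0 :=
          hu' _ _ (show j.1 < N + 6 + l.1 by omega)
        simp [h1, h2]
      have hm (a : Fin 6) : evalRow v (u.mulVec (Pi.single (midIdx N r a) 1)) =
          ∑ l, u (lowIdx N r l) (midIdx N r a) • evalRow v (Pi.single (lowIdx N r l) 1) +
          ∑ c, u (midIdx N r c) (midIdx N r a) • evalRow v (Pi.single (midIdx N r c) 1) := by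
        rw [mulVec_single_one_eq_sum, map_sum, sum_idx]
        have h2 (l : Fin r) : u (Fin.natAdd (N + 6) l) (midIdx N r a) = 0 :=
          hu' _ _ (show N + a.1 < N + 6 + l.1 by omega)
        simp [h2]
      rw [hc, det2_unitriangular _ _ _ (fun j l => u (lowIdx N r l) (lowIdx N r j))
        (fun i => hu _) (fun i j hij => hu' _ _ hij), hm a, hm b]
      let c : Fin N → Fin (N + 2) → K := fun j => evalRow v (Pi.single (lowIdx N r j) 1)
      exact bilin_window (det2Bil c) c (fun j q => det2_left j q c)
        (fun j q => det2_right j q c) _ _ _ _ _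
  · refine ⟨fun _ => 1, fun i => vecCons
      (Pi.single (midIdx N r ⟨2 * i.1, by omega⟩) 1)
      (vecCons (Pi.single (midIdx N r ⟨2 * i.1 + 1, by omega⟩) 1)
        (fun j => Pi.single (lowIdx N r j) 1)), fun a b => ?_⟩
    rw [← symJ_eq']
    refine Finset.sum_congr rfl fun i _ => ?_
    have hlow (a : Fin 6) (j : Fin N) : lowIdx N r j ≠ midIdx N r a := fun h => by
      have : j.1 = N + a.1 := congrArg Fin.val h
      omega
    have hmid (a b : Fin 6) : midIdx N r a = midIdx N r b ↔ a = b := by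
      rw [Fin.ext_iff, Fin.ext_iff]
      change N + a.1 = N + b.1 ↔ _
      omega
    have hlow' (i j : Fin N) : lowIdx N r i = lowIdx N r j ↔ i = j := by
      rw [Fin.ext_iff, Fin.ext_iff]
      rfl
    rw [famA_apply]
    have hc : (fun j => evalRow (vecCons
        (Pi.single (midIdx N r ⟨2 * i.1, by omega⟩) 1)
        (vecCons (Pi.single (midIdx N r ⟨2 * i.1 + 1, by omega⟩) (1 : K))
        (fun j => Pi.single (lowIdx N r j) 1))) (Pi.single (lowIdx N r j) 1)) =
        tailStd K N := by
      funext j x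
      rw [evalRow_single]
      refine Fin.cases ?_ (fun x => Fin.cases ?_ (fun x => ?_) x) x
      · simp [tailStd, hlow]
      · simp [tailStd, hlow, one_ne_succ_succ]
      · simp [tailStd, Pi.single_apply, hlow', eq_comm]
    rw [hc, det2_tailStd]
    simp only [evalRow_single]
    simp [Pi.single_apply, hmid, Fin.ext_iff]

end FirstFamily

/-! ### The weight `ω_{k-4} + 2ω_{k+2}` -/

section SecondFamily

variable {K : Type} [Field K] {M r : ℕ}

open Matrix (vecCons)

/-- The `a`-th of the last six indices in `Fin (M + 4 + 2)`. -/
def topIdx (M : ℕ) (a : Fin 6) : Fin (M + 4 + 2) := ⟨M + a, by omega⟩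

lemma topIdx_inj (a b : Fin 6) : topIdx M a = topIdx M b ↔ a = b := by
  rw [Fin.ext_iff, Fin.ext_iff]
  change M + a.1 = M + b.1 ↔ _
  omega

/-- The projection of `K^{n+r}` to its first `n` coordinates. -/
def trunc (K : Type) [Field K] (n r : ℕ) : (Fin (n + r) → K) →ₗ[K] (Fin n → K) :=
  LinearMap.funLeft K K (Fin.castAdd r)

lemma trunc_apply {n r : ℕ} (w : Fin (n + r) → K) (i : Fin n) :
    trunc K n r w i = w (Fin.castAdd r i) := rfl

/-- The alternating form `v ↦ det(x, y, v₁, …, v_k)`, `k = M + 4`, the vectors `vᵢ` being first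
projected to `K^{k+2}`. With `x, y` standard basis vectors this is, up to sign, the Plücker
coordinate of the complementary `k`-subset of the first `k + 2` indices. -/
def famB (x y : Fin (M + 4 + 2) → K) :
    (Fin (M + 4 + 2 + r) → K) [⋀^Fin (M + 4)]→ₗ[K] K :=
  (det2 x y).compLinearMap (trunc K (M + 4 + 2) r)

lemma famB_apply (x y : Fin (M + 4 + 2) → K) (v : Fin (M + 4) → Fin (M + 4 + 2 + r) → K) :
    famB x y v = det2 x y (fun i => trunc K (M + 4 + 2) r (v i)) := rfl

lemma sum_topIdx {A : Type} [AddCommMonoid A] (F : Fin (M + 4 + 2) → A) :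
    ∑ i, F i = ∑ j : Fin M, F ⟨j, by omega⟩ + ∑ a, F (topIdx M a) :=
  Fin.sum_univ_add (a := M) (b := 6) F

/-- Two rows equal to standard basis vectors `e_p`, `e_q`: scaling the columns by `d` in the
remaining rows multiplies the determinant by the product of the `d l` with `l ≠ p, q`. -/
lemma det2_scale {N : ℕ} (d : Fin (N + 2) → K) (p q : Fin (N + 2))
    (c : Fin N → Fin (N + 2) → K) :
    det2 (Pi.single p 1) (Pi.single q 1) (fun j l => d l * c j l) =
      (∏ l, if l = p ∨ l = q then 1 else d l) *
        det2 (Pi.single p 1) (Pi.single q 1) c := by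
  set d' : Fin (N + 2) → K := fun l => if l = p ∨ l = q then 1 else d l with hd'
  have h1 : (∏ l, d' l) * det2 (Pi.single p 1) (Pi.single q 1) c =
      det2 (Pi.single p 1) (Pi.single q 1) (fun j l => d' l * c j l) := by
    rw [det2_apply, ← Matrix.det_mul_row, det2_apply]
    congr 1
    ext i l
    refine Fin.cases ?_ (fun i => Fin.cases ?_ (fun i => ?_) i) i
    · by_cases h : l = p <;> simp [hd', h]
    · by_cases h : l = q <;> simp [hd', h]
    · simp
  rw [h1]
  -- `e_p` and `e_q` are rows, so the entries in the columns `p` and `q` of the others are free.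
  by_cases hpq : p = q
  · subst hpq
    rw [det2_self, det2_self]
  have h2 : det2 (Pi.single p 1) (Pi.single q 1) (fun j l => d l * c j l) =
      det2 (Pi.single p 1) (Pi.single q 1) (fun j l => (if l = p then 1 else d l) * c j l) := by
    rw [det2_apply, det2_apply]
    refine Matrix.det_eq_of_forall_row_eq_smul_add_const
      (vecCons 0 (vecCons 0 fun j => (d p - 1) * c j p)) 0 (by simp) fun i l => ?_
    refine Fin.cases ?_ (fun i => Fin.cases ?_ (fun i => ?_) i) i
    · simp
    · simp
    · by_cases h : l = p
      · subst h; simp; ring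
      · simp [h]
  rw [h2, det2_apply, det2_apply]
  refine Matrix.det_eq_of_forall_row_eq_smul_add_const
    (vecCons 0 (vecCons 0 fun j => (d q - 1) * c j q)) 1 (by simp) fun i l => ?_
  refine Fin.cases ?_ (fun i => Fin.cases ?_ (fun i => ?_) i) i
  · simp
  · simp
  · by_cases h : l = q
    · subst h; simp [hd', Ne.symm hpq]; ring
    · simp [hd', h]

lemma det2_mulVec {N : ℕ} (G : Matrix (Fin (N + 2)) (Fin (N + 2)) K) (hG : G.det = 1)
    (x y : Fin (N + 2) → K) (c : Fin N → Fin (N + 2) → K) :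
    det2 x y (fun j => G.mulVec (c j)) = det2 (G⁻¹.mulVec x) (G⁻¹.mulVec y) c := by
  have hu : IsUnit G.det := by rw [hG]; exact isUnit_one
  have hv (x : Fin (N + 2) → K) : G.mulVec (G⁻¹.mulVec x) = x := by
    rw [Matrix.mulVec_mulVec, Matrix.mul_nonsing_inv _ hu, Matrix.one_mulVec]
  rw [det2_apply, det2_apply, ← mul_one (Matrix.det (Matrix.of (vecCons (G⁻¹.mulVec x) _))),
    ← hG, ← Matrix.det_transpose G, ← Matrix.det_mul]
  congr 1
  funext i
  rw [Matrix.mul_apply_eq_vecMul, Matrix.vecMul_transpose]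
  refine Fin.cases ?_ (fun i => Fin.cases ?_ (fun i => ?_) i) i
  · exact (hv x).symm
  · exact (hv y).symm
  · rfl

/-- The `2 × 2` minor in the columns `p ≠ q` is, up to sign, the determinant completed by the
other standard basis vectors. -/
lemma exists_minor {N : ℕ} (p q : Fin (N + 2)) (hpq : p ≠ q) :
    ∃ (s : K) (c : Fin N → Fin (N + 2) → K), ∀ x y : Fin (N + 2) → K,
      s * det2 x y c = x p * y q - x q * y p := by
  obtain ⟨σ, h0, h1⟩ : ∃ σ : Equiv.Perm (Fin (N + 2)), σ 0 = p ∧ σ 1 = q := by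
    have hne : Equiv.swap 0 p (1 : Fin (N + 2)) ≠ p := fun h => by
      have h' : Equiv.swap 0 p (1 : Fin (N + 2)) = Equiv.swap 0 p 0 := by
        rw [h, Equiv.swap_apply_left]
      have := (Equiv.swap 0 p).injective h'
      simp at this
    refine ⟨(Equiv.swap 0 p).trans (Equiv.swap (Equiv.swap 0 p 1) q), ?_, ?_⟩
    · rw [Equiv.trans_apply, Equiv.swap_apply_left, Equiv.swap_apply_of_ne_of_ne hne.symm hpq]
    · rw [Equiv.trans_apply, Equiv.swap_apply_left]
  refine ⟨((σ.sign : ℤ) : K), fun j => Pi.single (σ j.succ.succ) 1, fun x y => ?_⟩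
  have h := Matrix.det_permute' σ
    (Matrix.of (vecCons x (vecCons y fun j : Fin N => Pi.single (σ j.succ.succ) (1 : K))))
  rw [det2_apply, ← h, ← h0, ← h1]
  change _ = (x ∘ σ) 0 * (y ∘ σ) 1 - (x ∘ σ) 1 * (y ∘ σ) 0
  rw [← det2_tailStd, det2_apply]
  congr 1
  ext i l
  refine Fin.cases ?_ (fun i => Fin.cases ?_ (fun i => ?_) i) i
  · rfl
  · rfl
  · simp [tailStd, Pi.single_apply]

/-- In each term of the Pfaffian every index `≥ M` is omitted by exactly one of the three
products, and no index `< M` is. -/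
lemma prod_triple (d : Fin (M + 4 + 2) → K) (σ : Equiv.Perm (Fin 6)) :
    (∏ l, if l = topIdx M (σ 0) ∨ l = topIdx M (σ 1) then 1 else d l) *
    (∏ l, if l = topIdx M (σ 2) ∨ l = topIdx M (σ 3) then 1 else d l) *
    (∏ l, if l = topIdx M (σ 4) ∨ l = topIdx M (σ 5) then 1 else d l) =
    ∏ l : Fin (M + 4 + 2), d l ^ ((if (l : ℕ) < M then 1 else 0) + 2) := by
  rw [← Finset.prod_mul_distrib, ← Finset.prod_mul_distrib]
  refine Finset.prod_congr rfl fun l _ => ?_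
  by_cases hl : (l : ℕ) < M
  · have (a : Fin 6) : l ≠ topIdx M a := fun h => by
      have : (l : ℕ) = M + a := congrArg Fin.val h
      omega
    simp only [this, or_self, if_false, if_pos hl]
    ring
  · obtain ⟨a, rfl⟩ : ∃ a, l = topIdx M a :=
      ⟨⟨l - M, by omega⟩, Fin.ext (show l.1 = M + (l.1 - M) by omega)⟩
    obtain ⟨i, rfl⟩ := σ.surjective a
    simp only [topIdx_inj, EmbeddingLike.apply_eq_iff_eq, if_neg hl]
    fin_cases i <;> simp <;> ring

lemma inv_lower_unitriangular {n : ℕ} (G : Matrix (Fin n) (Fin n) K) (h1 : ∀ i, G i i = 1)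
    (h0 : ∀ i j, i < j → G i j = 0) :
    G.det = 1 ∧ (∀ i, G⁻¹ i i = 1) ∧ ∀ i j, i < j → G⁻¹ i j = 0 := by
  have hG : G.BlockTriangular OrderDual.toDual := fun i j hij => h0 i j hij
  have hdet : G.det = 1 := by
    rw [Matrix.det_of_isLowerTriangular _ hG]
    simp [h1]
  have hu : IsUnit G.det := by rw [hdet]; exact isUnit_one
  have : Invertible G := G.invertibleOfIsUnitDet hu
  have hinv : ∀ i j, i < j → G⁻¹ i j = 0 := fun i j hij =>
    Matrix.blockTriangular_inv_of_blockTriangular hG hij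
  refine ⟨hdet, fun i => ?_, hinv⟩
  have h := congrFun (congrFun (Matrix.nonsing_inv_mul G hu) i) i
  rw [Matrix.mul_apply, Matrix.one_apply_eq, Finset.sum_eq_single i] at h
  · simpa [h1] using h
  · intro j _ hji
    rcases lt_or_gt_of_ne hji with hlt | hgt
    · rw [h0 _ _ hlt, mul_zero]
    · rw [hinv _ _ hgt, zero_mul]
  · simp

/-- The Pfaffian of the complementary Plücker coordinates `± T_{{0,…,M+5} ∖ {a,b}}`,
`M ≤ a, b < M + 6`, is the highest weight vector of weight `ω_M + 2ω_{M+6}`, where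
`k = M + 4`. -/
theorem exists_hw_second [CharZero K] (e : Fin (M + 4 + 2 + r) → ℕ)
    (he : e = fun i : Fin (M + 4 + 2 + r) =>
      (if (i : ℕ) < M then 1 else 0) + (if (i : ℕ) < M + 4 + 2 then 2 else 0)) :
    ∃ P ∈ idealComponent K (secantCone K (grassConeL K (M + 4 + 2 + r) (M + 4))) 3,
      IsHWFunction (M + 4 + 2 + r) (M + 4) e P := by
  refine exists_hw (fun a b => famB (Pi.single (topIdx M a) 1) (Pi.single (topIdx M b) 1))
    e ?_ ?_ ?_ ?_
  · intro v
    obtain ⟨f, h, hfh⟩ := det2_rank_two (fun i => trunc K (M + 4 + 2) r (v i))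
    exact ⟨fun a => f (Pi.single (topIdx M a) 1), fun a => h (Pi.single (topIdx M a) 1),
      fun a b => by rw [famB_apply, hfh]⟩
  · intro d
    refine ⟨fun a b => ∏ l, if l = topIdx M a ∨ l = topIdx M b then 1 else
      d (Fin.castAdd r l), ?_, ?_⟩
    · intro a b v
      rw [famB_apply, famB_apply,
        ← det2_scale (fun l => d (Fin.castAdd r l)) (topIdx M a) (topIdx M b)]
      congr 1
      funext j l
      simp [trunc_apply, Matrix.mulVec_diagonal]
    · intro σ
      rw [prod_triple (fun l => d (Fin.castAdd r l)), he,
        Fin.prod_univ_add (a := M + 4 + 2) (b := r)]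
      have h2 : ∏ l : Fin r, d (Fin.natAdd (M + 4 + 2) l) ^
          ((if (Fin.natAdd (M + 4 + 2) l : ℕ) < M then 1 else 0) +
          (if (Fin.natAdd (M + 4 + 2) l : ℕ) < M + 4 + 2 then 2 else 0)) = 1 := by
        refine Finset.prod_eq_one fun l _ => ?_
        have : (Fin.natAdd (M + 4 + 2) l : ℕ) = M + 4 + 2 + l := rfl
        rw [if_neg (by omega), if_neg (by omega), zero_add, pow_zero]
      rw [h2, mul_one]
      refine Finset.prod_congr rfl fun l _ => ?_
      change _ = d (Fin.castAdd r l) ^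
        ((if l.1 < M then 1 else 0) + (if l.1 < M + 4 + 2 then 2 else 0))
      rw [if_pos l.2]
  · intro u hu hu'
    -- With `G` the leading block of `uᵀ`, substituting `uᵀ v` for `v` amounts to applying the
    -- lower unitriangular matrix `G⁻¹` to `x` and `y`, which preserves the span of the last six
    -- basis vectors.
    let G : Matrix (Fin (M + 4 + 2)) (Fin (M + 4 + 2)) K :=
      Matrix.of fun i j => u (Fin.castAdd r j) (Fin.castAdd r i)
    obtain ⟨hdet, hd, ho⟩ := inv_lower_unitriangular G (fun i => hu _)
      (fun i j hij => hu' _ _ hij)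
    have hG (w : Fin (M + 4 + 2 + r) → K) : trunc K (M + 4 + 2) r (u.transpose.mulVec w) =
        G.mulVec (trunc K (M + 4 + 2) r w) := by
      funext i
      rw [trunc_apply, Matrix.mulVec, dotProduct, Fin.sum_univ_add]
      have h2 (l : Fin r) : u.transpose (Fin.castAdd r i) (Fin.natAdd (M + 4 + 2) l) = 0 :=
        hu' _ _ (show i.1 < M + 4 + 2 + l.1 by omega)
      simp only [h2, zero_mul, Finset.sum_const_zero, add_zero]
      rfl
    refine ⟨Matrix.of fun a c => G⁻¹ (topIdx M c) (topIdx M a), ?_, ?_⟩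
    · rw [Matrix.det_of_isUpperTriangular]
      · simp [hd]
      · intro a c hac
        refine ho _ _ ?_
        change M + c.1 < M + a.1
        have : c.1 < a.1 := hac
        omega
    · intro a b v
      simp only [famB_apply, hG, Matrix.of_apply]
      have hm (a : Fin 6) : G⁻¹.mulVec (Pi.single (topIdx M a) 1) =
          ∑ j : Fin 0, (0 : K) • (0 : Fin (M + 4 + 2) → K) +
          ∑ c, G⁻¹ (topIdx M c) (topIdx M a) •
            (Pi.single (topIdx M c) 1 : Fin (M + 4 + 2) → K) := by
        rw [mulVec_single_one_eq_sum, sum_topIdx]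
        congr 1
        simp only [Finset.univ_eq_empty, Finset.sum_empty]
        refine Finset.sum_eq_zero fun j _ => ?_
        rw [ho _ _ (show j.1 < M + a.1 by omega), zero_smul]
      rw [det2_mulVec G hdet, hm a, hm b]
      exact bilin_window (N := 0) (det2Bil fun i => trunc K (M + 4 + 2) r (v i))
        (fun _ => 0) (by simp) (by simp) _ (fun _ => 0) (fun _ => 0) _ _
  · choose s c hsc using fun i : Fin 3 => exists_minor (K := K) (N := M + 4)
      (topIdx M ⟨2 * i.1, by omega⟩) (topIdx M ⟨2 * i.1 + 1, by omega⟩)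
      (by rw [Ne, topIdx_inj, Fin.ext_iff]; simp)
    refine ⟨s, fun i j => Fin.append (c i j) 0, fun a b => ?_⟩
    rw [← symJ_eq']
    refine Finset.sum_congr rfl fun i _ => ?_
    have ht : (fun j => trunc K (M + 4 + 2) r (Fin.append (c i j) 0)) = c i := by
      funext j l
      rw [trunc_apply, Fin.append_left]
    rw [famB_apply, ht, hsc]
    simp only [Pi.single_apply, topIdx_inj]
    simp [Fin.ext_iff, eq_comm]

end SecondFamily

theorem stmt5 (K : Type) [Field K] [IsAlgClosed K] [CharZero K]
    (m k : ℕ) (hk : 4 ≤ k) (hm : 2 * k ≤ m) :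
    -- a highest weight vector of weight `2ω_{k-2} + ω_{k+4}` in the degree-three part
    -- of the ideal of the secant variety of the Grassmannian
    (∃ P ∈ idealComponent K (secantCone K (grassConeL K m k)) 3,
      IsHWFunction m k
        (fun i => (if (i : ℕ) < k - 2 then 2 else 0) + (if (i : ℕ) < k + 4 then 1 else 0))
        P) ∧
    -- and one of weight `ω_{k-4} + 2ω_{k+2}`
    (∃ P ∈ idealComponent K (secantCone K (grassConeL K m k)) 3,
      IsHWFunction m k
        (fun i => (if (i : ℕ) < k - 4 then 1 else 0) + (if (i : ℕ) < k + 2 then 2 else 0))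
        P) := by
  constructor
  · obtain ⟨N, rfl⟩ : ∃ N, k = N + 2 := ⟨k - 2, by omega⟩
    obtain ⟨r, rfl⟩ : ∃ r, m = N + 6 + r := ⟨m - (N + 6), by omega⟩
    exact exists_hw_first _ rfl
  · obtain ⟨M, rfl⟩ : ∃ M, k = M + 4 := ⟨k - 4, by omega⟩
    obtain ⟨r, rfl⟩ : ∃ r, m = M + 4 + 2 + r := ⟨m - (M + 4 + 2), by omega⟩
    exact exists_hw_second _ rfl

end Stmt5

end
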